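/- Let b be an integer with 1 ≤ b ≤ 9 and b ≠ 7. Then for every positive integer k there exists a rational triangle T ⊂ ℝ² that is pseudointegral, has denominator greater than k, has exactly one lattice point in its interior, and has exactly b lattice points on its boundary. -/

import Mathlib

open Set Pointwise

/-- The set of lattice points of the plane. -/
def latticePts : Set (ℝ × ℝ) := {p | ∃ m n : ℤ, p = ((m : ℝ), (n : ℝ))}

/-- The coercion of a rational point of the plane to a real point. -/
def qpt (v : ℚ × ℚ) : ℝ × ℝ := ((v.1 : ℝ), (v.2 : ℝ))

/-- The Ehrhart function of a set `P ⊆ ℝ²`:  `t ↦ #(tP ∩ ℤ²)`. -/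
noncomputable def ehr (P : Set (ℝ × ℝ)) (t : ℕ) : ℕ :=
  (((t : ℝ) • P) ∩ latticePts).ncard

/-- A set `P ⊆ ℝ²` is pseudointegral (a PIP) if its Ehrhart function agrees with
a polynomial at all positive integers. -/
def IsPIP (P : Set (ℝ × ℝ)) : Prop :=
  ∃ c : Polynomial ℚ, ∀ t : ℕ, 0 < t → (ehr P t : ℚ) = c.eval (t : ℚ)

/-- A rational triangle: the convex hull of three non-collinear rational points. -/
def IsRatTriangle (T : Set (ℝ × ℝ)) : Prop :=
  ∃ p q r : ℚ × ℚ, ¬ Collinear ℝ ({qpt p, qpt q, qpt r} : Set (ℝ × ℝ)) ∧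
    T = convexHull ℝ {qpt p, qpt q, qpt r}

/-- `P` has denominator `d`: `d` is the least positive integer `k` such that the
vertices (extreme points) of `kP` are all lattice points. -/
def HasDenom (P : Set (ℝ × ℝ)) (d : ℕ) : Prop :=
  IsLeast {k : ℕ | 0 < k ∧ Set.extremePoints ℝ ((k : ℝ) • P) ⊆ latticePts} d
/-!
Let a triangle around the origin be cut out by lines at lattice distance one from the origin. The
lattice points of its `(t + 1)`-st dilate are then those of its `t`-th dilate together with those on
the new boundary, and the origin is its only interior lattice point. If moreover the boundary of
the `s`-th dilate contains exactly `s * b` lattice points for every `s > 0`, the Ehrhart function is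
the polynomial `1 + b t (t + 1) / 2`.

Count the lattice points along each of the three edges of the `s`-th dilate by an interval of
integers. The ends of these intervals are integer parts, but for the triangle attached to a
solution of the Markov-type equation `a x² + c y² + N = a N α ε x y` with `a ε = c φ` the intervals
fit end to end, the integer parts cancel, and the total length is `s N ε φ`. One vertex of the
triangle has first coordinate `ε y / (α x)`, so the denominator is at least `x / ε`, and Vieta
jumping makes `x` as large as desired. A solution to start from exists for every `b = N ε φ ≤ 9`
other than `7`.
-/

section Polyhedron

variable {ι E : Type*} [AddCommGroup E] [Module ℝ E] [TopologicalSpace E]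

/-- The `t`-th dilate of the polyhedron cut out by the inequalities `ℓ i x ≤ 1`. -/
def polyhedron (ℓ : ι → E →L[ℝ] ℝ) (t : ℝ) : Set E := {x | ∀ i, ℓ i x ≤ t}

lemma smul_polyhedron (ℓ : ι → E →L[ℝ] ℝ) {t : ℝ} (ht : 0 < t) :
    t • polyhedron ℓ 1 = polyhedron ℓ t := by
  ext x
  simp only [mem_smul_set_iff_inv_smul_mem₀ ht.ne', polyhedron, mem_ofPred_eq, map_smul,
    smul_eq_mul, inv_mul_le_iff₀ ht, mul_one]

lemma isClosed_polyhedron (ℓ : ι → E →L[ℝ] ℝ) (t : ℝ) : IsClosed (polyhedron ℓ t) := by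
  simp only [polyhedron, ofPred_forall]
  exact isClosed_iInter fun i ↦ isClosed_le (ℓ i).continuous continuous_const

lemma interior_polyhedron [Finite ι] [ContinuousAdd E] [ContinuousSMul ℝ E]
    (ℓ : ι → E →L[ℝ] ℝ) {t : ℝ} (ht : 0 < t) :
    interior (polyhedron ℓ t) = {x | ∀ i, ℓ i x < t} := by
  have interior_halfSpace (i : ι) : interior (ℓ i ⁻¹' Iic t) = ℓ i ⁻¹' Iio t := by
    rcases eq_or_ne (ℓ i) 0 with h_zero | h_ne
    · simp [h_zero, preimage, ht, ht.le]
    · rw [← ((ℓ i).isOpenMap_of_ne_zero h_ne).preimage_interior_eq_interior_preimage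
        (ℓ i).continuous, interior_Iic]
  have : polyhedron ℓ t = ⋂ i, ℓ i ⁻¹' Iic t := by ext; simp [polyhedron]
  rw [this, interior_iInter_of_finite]
  ext
  simp [interior_halfSpace]

lemma frontier_polyhedron [Finite ι] [ContinuousAdd E] [ContinuousSMul ℝ E]
    (ℓ : ι → E →L[ℝ] ℝ) {t : ℝ} (ht : 0 < t) :
    frontier (polyhedron ℓ t) = {x ∈ polyhedron ℓ t | ∃ i, ℓ i x = t} := by
  rw [(isClosed_polyhedron ℓ t).frontier_eq, interior_polyhedron ℓ ht]
  ext x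
  simp only [mem_sdiff, mem_ofPred_eq, not_forall, not_lt]
  exact and_congr_right fun hx ↦ exists_congr fun i ↦ (hx i).ge_iff_eq

end Polyhedron

lemma eq_zero_of_isBounded_polyhedron {ι E : Type*} [NormedAddCommGroup E] [NormedSpace ℝ E]
    {ℓ : ι → E →L[ℝ] ℝ} (hℓ : Bornology.IsBounded (polyhedron ℓ 1)) {x : E}
    (hx : ∀ i, ℓ i x ≤ 0) : x = 0 := by
  obtain ⟨C, hC⟩ := hℓ.exists_norm_le
  by_contra hne
  obtain ⟨n, hn⟩ := exists_nat_gt (C / ‖x‖)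
  have hmem : (n : ℝ) • x ∈ polyhedron ℓ 1 := fun i ↦ by
    rw [map_smul, smul_eq_mul]
    exact (mul_nonpos_of_nonneg_of_nonpos n.cast_nonneg (hx i)).trans zero_le_one
  have hle := hC _ hmem
  rw [norm_smul, Real.norm_natCast, ← le_div_iff₀ (norm_pos_iff.2 hne)] at hle
  exact hle.not_gt hn

section Simplex

variable {ι E : Type*} [AddCommGroup E] [Module ℝ E] [TopologicalSpace E]
  {ℓ : ι → E →L[ℝ] ℝ} {v : ι → E}

lemma one_sub_apply_sum_smul [Fintype ι] (h_facet : ∀ i j, i ≠ j → ℓ i (v j) = 1) {w : ι → ℝ}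
    (i : ι) : ∑ j, w j - ℓ i (∑ j, w j • v j) = w i * (1 - ℓ i (v i)) := by
  rw [map_sum, ← Finset.sum_sub_distrib, Finset.sum_eq_single i]
  · rw [map_smul, smul_eq_mul, mul_one_sub]
  · intro j _ hji
    rw [map_smul, smul_eq_mul, h_facet i j hji.symm, mul_one, sub_self]
  · exact fun hi ↦ absurd (Finset.mem_univ i) hi

lemma affineIndependent_of_facets [Finite ι] (h_facet : ∀ i j, i ≠ j → ℓ i (v j) = 1)
    (h_ne : ∀ i, ℓ i (v i) ≠ 1) : AffineIndependent ℝ v := by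
  have := Fintype.ofFinite ι
  rw [affineIndependent_iff_of_fintype]
  intro w hw hv i
  rw [Finset.univ.weightedVSub_eq_linear_combination hw] at hv
  have := one_sub_apply_sum_smul h_facet (w := w) i
  rw [hw, hv, map_zero, sub_zero, eq_comm, mul_eq_zero, sub_eq_zero] at this
  exact this.resolve_right (h_ne i).symm

lemma convexHull_range_eq_polyhedron [Fintype ι] [FiniteDimensional ℝ E]
    (h_card : Fintype.card ι = Module.finrank ℝ E + 1)
    (h_facet : ∀ i j, i ≠ j → ℓ i (v j) = 1) (h_lt : ∀ i, ℓ i (v i) < 1) :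
    convexHull ℝ (range v) = polyhedron ℓ 1 := by
  have h_indep := affineIndependent_of_facets h_facet fun i ↦ (h_lt i).ne
  let B : AffineBasis ι ℝ E :=
    ⟨v, h_indep, h_indep.affineSpan_eq_top_iff_card_eq_finrank_add_one.2 h_card⟩
  have coord_mul (x : E) (i : ι) : 1 - ℓ i x = B.coord i x * (1 - ℓ i (v i)) := by
    have h_sum : ∑ j, B.coord j x • v j = x := B.linear_combination_coord_eq_self x
    have := one_sub_apply_sum_smul h_facet (w := fun j ↦ B.coord j x) i
    rwa [B.sum_coord_apply_eq_one, h_sum] at this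
  change convexHull ℝ (range B) = _
  rw [B.convexHull_eq_nonneg_coord]
  ext x
  refine forall_congr' fun i ↦ ?_
  rw [← sub_nonneg (a := (1 : ℝ)), coord_mul, mul_nonneg_iff_of_pos_right (sub_pos.2 (h_lt i))]

end Simplex

section Denominator

variable {ι : Type*} [Finite ι]

lemma extremePoints_convexHull_range {E : Type*} [NormedAddCommGroup E] [NormedSpace ℝ E]
    {v : ι → E} (hv : AffineIndependent ℝ v) :
    (convexHull ℝ (range v)).extremePoints ℝ = range v := by
  refine extremePoints_convexHull_subset.antisymm ?_
  rintro _ ⟨i, rfl⟩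
  set X := (convexHull ℝ (range v)).extremePoints ℝ
  have hX : X ⊆ range v := extremePoints_convexHull_subset
  have krein_milman : convexHull ℝ X = convexHull ℝ (range v) := by
    rw [← (((finite_range v).subset hX).isClosed_convexHull ℝ).closure_eq]
    exact closure_convexHull_extremePoints ((finite_range v).isCompact_convexHull ℝ)
      (convex_convexHull ℝ _)
  by_contra h_notMem
  have h_others : X ⊆ v '' (univ \ {i}) := fun x hx ↦ by
    obtain ⟨j, rfl⟩ := hX hx
    exact mem_image_of_mem v ⟨mem_univ j, fun hji ↦ h_notMem (hji ▸ hx)⟩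
  apply hv.notMem_affineSpan_sdiff i univ
  exact affineSpan_mono ℝ h_others
    (convexHull_subset_affineSpan X (krein_milman ▸ subset_convexHull ℝ _ (mem_range_self i)))

lemma extremePoints_smul {E : Type*} [AddCommGroup E] [Module ℝ E] {k : ℝ} (hk : k ≠ 0)
    (s : Set E) : (k • s).extremePoints ℝ = k • s.extremePoints ℝ :=
  (image_extremePoints (LinearEquiv.smulOfNeZero ℝ E k hk) s).symm

lemma exists_pos_forall_dvd_smul_qpt_mem_latticePts (v : ℚ × ℚ) :
    ∃ n : ℕ, 0 < n ∧ ∀ k : ℕ, n ∣ k → (k : ℝ) • qpt v ∈ latticePts := by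
  refine ⟨v.1.den * v.2.den, Nat.mul_pos v.1.den_pos v.2.den_pos, ?_⟩
  rintro _ ⟨k, rfl⟩
  refine ⟨k * v.2.den * v.1.num, k * v.1.den * v.2.num, ?_⟩
  have h₁ : (v.1 : ℝ) * v.1.den = v.1.num := by exact_mod_cast v.1.mul_den_eq_num
  have h₂ : (v.2 : ℝ) * v.2.den = v.2.num := by exact_mod_cast v.2.mul_den_eq_num
  ext
  · simp only [qpt, Prod.smul_fst, smul_eq_mul]
    push_cast
    linear_combination (k * v.2.den : ℝ) * h₁
  · simp only [qpt, Prod.smul_snd, smul_eq_mul]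
    push_cast
    linear_combination (k * v.1.den : ℝ) * h₂

lemma exists_hasDenom_convexHull (v : ι → ℚ × ℚ) :
    ∃ d, HasDenom (convexHull ℝ (range (qpt ∘ v))) d := by
  have := Fintype.ofFinite ι
  choose n hn_pos hn using fun i ↦ exists_pos_forall_dvd_smul_qpt_mem_latticePts (v i)
  suffices h : {k : ℕ | 0 < k ∧ ((k : ℝ) • convexHull ℝ (range (qpt ∘ v))).extremePoints ℝ ⊆
      latticePts}.Nonempty from ⟨_, Nat.sInf_mem h, fun _ ↦ Nat.sInf_le⟩
  refine ⟨∏ i, n i, Finset.prod_pos fun i _ ↦ hn_pos i, ?_⟩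
  rw [← convexHull_smul]
  refine extremePoints_convexHull_subset.trans ?_
  rintro _ ⟨_, ⟨i, rfl⟩, rfl⟩
  exact hn i _ (Finset.dvd_prod_of_mem n (Finset.mem_univ i))

lemma HasDenom.smul_qpt_mem_latticePts {v : ι → ℚ × ℚ} {d : ℕ}
    (hd : HasDenom (convexHull ℝ (range (qpt ∘ v))) d) (hv : AffineIndependent ℝ (qpt ∘ v))
    (i : ι) : (d : ℝ) • qpt (v i) ∈ latticePts := by
  obtain ⟨hd_pos, h_extreme⟩ := hd.1
  rw [extremePoints_smul (Nat.cast_ne_zero.2 hd_pos.ne'),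
    extremePoints_convexHull_range hv] at h_extreme
  exact h_extreme (smul_mem_smul_set (mem_range_self i))

end Denominator

lemma isRatTriangle_convexHull {v : Fin 3 → ℚ × ℚ} (hv : AffineIndependent ℝ (qpt ∘ v)) :
    IsRatTriangle (convexHull ℝ (range (qpt ∘ v))) := by
  have h_range : range (qpt ∘ v) = {qpt (v 0), qpt (v 1), qpt (v 2)} := by
    ext; simp [Fin.exists_fin_succ, eq_comm]
  exact ⟨v 0, v 1, v 2, h_range ▸ affineIndependent_iff_not_collinear.1 hv, by rw [h_range]⟩

section Lattice

variable {ι : Type*}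

/-- The integer point `P`, viewed in the real plane. -/
def intPt (P : ℤ × ℤ) : ℝ × ℝ := (P.1, P.2)

lemma intPt_injective : Function.Injective intPt :=
  Int.cast_injective.prodMap Int.cast_injective

lemma range_intPt : range intPt = latticePts := by
  ext P
  simp [latticePts, intPt, eq_comm]

lemma ncard_inter_latticePts (A : Set (ℝ × ℝ)) :
    (A ∩ latticePts).ncard = (intPt ⁻¹' A).ncard := by
  rw [← range_intPt, ← image_preimage_eq_inter_range, ncard_image_of_injective _ intPt_injective]

/-- The pairing between the dual lattice and the lattice `ℤ²`. -/
def dot (u P : ℤ × ℤ) : ℤ := u.1 * P.1 + u.2 * P.2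

/-- The real extension of `dot u`. -/
noncomputable def dotCLM (u : ℤ × ℤ) : ℝ × ℝ →L[ℝ] ℝ :=
  (u.1 : ℝ) • ContinuousLinearMap.fst ℝ ℝ ℝ + (u.2 : ℝ) • ContinuousLinearMap.snd ℝ ℝ ℝ

lemma dotCLM_apply (u : ℤ × ℤ) (P : ℝ × ℝ) : dotCLM u P = u.1 * P.1 + u.2 * P.2 := rfl

lemma dotCLM_intPt (u P : ℤ × ℤ) : dotCLM u (intPt P) = dot u P := by
  simp [dotCLM_apply, dot, intPt]

lemma dotCLM_qpt (u : ℤ × ℤ) (v : ℚ × ℚ) :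
    dotCLM u (qpt v) = ((u.1 * v.1 + u.2 * v.2 : ℚ) : ℝ) := by
  simp [dotCLM_apply, qpt]

/-- The polygon cut out by the lines at lattice distance one from the origin with outer
normals `u i`. -/
def normalPolygon (u : ι → ℤ × ℤ) : Set (ℝ × ℝ) := polyhedron (fun i ↦ dotCLM (u i)) 1

/-- The lattice points of the `t`-th dilate of `normalPolygon u`. -/
def latticePolygon (u : ι → ℤ × ℤ) (t : ℤ) : Set (ℤ × ℤ) := {P | ∀ i, dot (u i) P ≤ t}

/-- The lattice points on the boundary of the `t`-th dilate of `normalPolygon u`. -/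
def latticeBoundary (u : ι → ℤ × ℤ) (t : ℤ) : Set (ℤ × ℤ) :=
  {P ∈ latticePolygon u t | ∃ i, dot (u i) P = t}

lemma ehr_normalPolygon (u : ι → ℤ × ℤ) {t : ℕ} (ht : 0 < t) :
    ehr (normalPolygon u) t = (latticePolygon u t).ncard := by
  rw [ehr, normalPolygon, smul_polyhedron _ (Nat.cast_pos.2 ht), ncard_inter_latticePts]
  congr 1
  ext P
  simp only [polyhedron, latticePolygon, mem_preimage, mem_ofPred_eq, dotCLM_intPt]
  norm_cast

lemma intPt_preimage_interior_normalPolygon [Finite ι] (u : ι → ℤ × ℤ) :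
    intPt ⁻¹' interior (normalPolygon u) = latticePolygon u 0 := by
  ext P
  simp only [normalPolygon, interior_polyhedron _ one_pos, latticePolygon, mem_preimage,
    mem_ofPred_eq, dotCLM_intPt]
  norm_cast
  exact forall_congr' fun i ↦ Int.lt_add_one_iff (b := 0)

lemma intPt_preimage_frontier_normalPolygon [Finite ι] (u : ι → ℤ × ℤ) :
    intPt ⁻¹' frontier (normalPolygon u) = latticeBoundary u 1 := by
  ext P
  rw [mem_preimage, normalPolygon, frontier_polyhedron _ one_pos]
  simp only [polyhedron, latticeBoundary, latticePolygon, mem_ofPred_eq, dotCLM_intPt]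
  norm_cast

lemma latticePolygon_add_one (u : ι → ℤ × ℤ) (t : ℤ) :
    latticePolygon u (t + 1) = latticePolygon u t ∪ latticeBoundary u (t + 1) := by
  ext P
  simp only [latticePolygon, latticeBoundary, mem_union, mem_ofPred_eq]
  constructor
  · intro h
    by_cases h_eq : ∃ i, dot (u i) P = t + 1
    · exact .inr ⟨h, h_eq⟩
    · exact .inl fun i ↦ Int.lt_add_one_iff.1 ((h i).lt_of_ne fun hi ↦ h_eq ⟨i, hi⟩)
  · rintro (h | h)
    · exact fun i ↦ (h i).trans (Int.le_add_one le_rfl)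
    · exact h.1

lemma disjoint_latticePolygon_latticeBoundary (u : ι → ℤ × ℤ) (t : ℤ) :
    Disjoint (latticePolygon u t) (latticeBoundary u (t + 1)) := by
  rw [disjoint_left]
  rintro P hP ⟨-, i, hi⟩
  have := hP i
  lia

-- Each lattice point of `t + 1` times the polygon lies in `t` times the polygon or on the new
-- boundary, because the edges are at lattice distance one.
lemma two_mul_ncard_latticePolygon {u : ι → ℤ × ℤ} {b : ℕ} (hb : 0 < b)
    (h_zero : latticePolygon u 0 = {0})
    (h_boundary : ∀ s : ℕ, 0 < s → (latticeBoundary u s).ncard = s * b) (t : ℕ) :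
    2 * (latticePolygon u t).ncard = 2 + b * (t * (t + 1)) ∧ (latticePolygon u t).Finite := by
  induction t with
  | zero => simp [h_zero]
  | succ t ih =>
    have h_card := h_boundary (t + 1) t.succ_pos
    have h_fin : (latticeBoundary u (t + 1 : ℕ)).Finite :=
      finite_of_ncard_pos (h_card ▸ Nat.mul_pos t.succ_pos hb)
    push_cast at h_card h_fin ⊢
    rw [latticePolygon_add_one, ncard_union_eq (disjoint_latticePolygon_latticeBoundary u t)
      ih.2 h_fin, h_card, mul_add, ih.1]
    exact ⟨by ring, ih.2.union h_fin⟩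

lemma isPIP_normalPolygon {u : ι → ℤ × ℤ} {b : ℕ} (hb : 0 < b)
    (h_zero : latticePolygon u 0 = {0})
    (h_boundary : ∀ s : ℕ, 0 < s → (latticeBoundary u s).ncard = s * b) :
    IsPIP (normalPolygon u) := by
  refine ⟨1 + .C (b / 2 : ℚ) * (.X * (.X + 1)), fun t ht ↦ ?_⟩
  have h_card : (2 : ℚ) * (latticePolygon u t).ncard = 2 + b * (t * (t + 1)) := by
    exact_mod_cast (two_mul_ncard_latticePolygon hb h_zero h_boundary t).1
  rw [ehr_normalPolygon u ht]
  simp only [Polynomial.eval_add, Polynomial.eval_mul, Polynomial.eval_C, Polynomial.eval_X,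
    Polynomial.eval_one]
  linear_combination h_card / 2

lemma latticePolygon_zero_eq {u : ι → ℤ × ℤ} (hu : Bornology.IsBounded (normalPolygon u)) :
    latticePolygon u 0 = {0} := by
  refine Subset.antisymm (fun P hP ↦ intPt_injective ?_) ?_
  · have h_zero : intPt P = 0 := eq_zero_of_isBounded_polyhedron hu fun i ↦ by
      rw [dotCLM_intPt]
      exact_mod_cast hP i
    rw [h_zero]
    ext <;> simp [intPt]
  · rintro _ rfl i
    simp [dot]

/-- The lattice points of the `t`-th dilate of `normalPolygon u` lying on the edge with normal `u i`
but not on an earlier edge, so that distinct edges share no vertex. -/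
def latticeEdge [LT ι] (u : ι → ℤ × ℤ) (t : ℤ) (i : ι) : Set (ℤ × ℤ) :=
  {P | dot (u i) P = t ∧ (∀ j < i, dot (u j) P < t) ∧ ∀ j > i, dot (u j) P ≤ t}

lemma iUnion_latticeEdge [LinearOrder ι] [WellFoundedLT ι] (u : ι → ℤ × ℤ) (t : ℤ) :
    ⋃ i, latticeEdge u t i = latticeBoundary u t := by
  ext P
  simp only [mem_iUnion]
  constructor
  · rintro ⟨i, h_eq, h_lt, h_gt⟩
    refine ⟨fun j ↦ ?_, i, h_eq⟩
    rcases lt_trichotomy j i with hj | rfl | hj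
    exacts [(h_lt j hj).le, h_eq.le, h_gt j hj]
  · rintro ⟨hP, h_edge⟩
    obtain ⟨i, hi, h_min⟩ := WellFounded.has_min wellFounded_lt {i | dot (u i) P = t} h_edge
    exact ⟨i, hi, fun j hji ↦ (hP j).lt_of_ne fun hj ↦ h_min j hj hji, fun j _ ↦ hP j⟩

lemma pairwise_disjoint_latticeEdge [LinearOrder ι] (u : ι → ℤ × ℤ) (t : ℤ) :
    Pairwise (Function.onFun Disjoint (latticeEdge u t)) := by
  refine (pairwise_disjoint_on _).2 fun i j hij ↦ disjoint_left.2 ?_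
  rintro P ⟨hi, -⟩ ⟨-, hj, -⟩
  exact (hj i hij).ne hi

lemma ncard_latticeBoundary [LinearOrder ι] [Fintype ι] {u : ι → ℤ × ℤ} {t : ℤ}
    (h_fin : ∀ i, (latticeEdge u t i).Finite) :
    (latticeBoundary u t).ncard = ∑ i, (latticeEdge u t i).ncard := by
  rw [← iUnion_latticeEdge, ncard_iUnion_of_finite h_fin (pairwise_disjoint_latticeEdge u t),
    finsum_eq_sum_of_fintype]

/-- The lattice points of the line `dot u P = s`, enumerated along its primitive direction from
the base point `s • w`, where `dot u w = 1`. -/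
def linePt (u w : ℤ × ℤ) (s n : ℤ) : ℤ × ℤ := s • w + n • (u.2, -u.1)

lemma dot_linePt (v u w : ℤ × ℤ) (s n : ℤ) :
    dot v (linePt u w s n) = s * dot v w + n * (v.1 * u.2 - v.2 * u.1) := by
  simp only [dot, linePt, Prod.fst_add, Prod.snd_add, Prod.smul_fst, Prod.smul_snd, smul_eq_mul]
  ring

lemma linePt_injective {u w : ℤ × ℤ} (hw : dot u w = 1) (s : ℤ) :
    Function.Injective (linePt u w s) := by
  have h_left : Function.LeftInverse (fun P : ℤ × ℤ ↦ w.2 * P.1 - w.1 * P.2) (linePt u w s) := by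
    intro n
    simp only [dot, linePt, Prod.fst_add, Prod.snd_add, Prod.smul_fst, Prod.smul_snd,
      smul_eq_mul] at hw ⊢
    linear_combination n * hw
  exact h_left.injective

lemma range_linePt {u w : ℤ × ℤ} (hw : dot u w = 1) (s : ℤ) :
    range (linePt u w s) = {P | dot u P = s} := by
  ext P
  constructor
  · rintro ⟨n, rfl⟩
    rw [mem_ofPred_eq, dot_linePt, hw]
    ring
  · rintro rfl
    refine ⟨w.2 * P.1 - w.1 * P.2, ?_⟩
    ext <;> simp only [dot, linePt, Prod.fst_add, Prod.snd_add, Prod.smul_fst, Prod.smul_snd,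
      smul_eq_mul] at hw ⊢
    · linear_combination P.1 * hw
    · linear_combination P.2 * hw

lemma linePt_mem_latticeEdge [LT ι] {u : ι → ℤ × ℤ} {w : ℤ × ℤ} {i : ι} (hw : dot (u i) w = 1)
    (s n : ℤ) : linePt (u i) w s n ∈ latticeEdge u s i ↔
      (∀ j < i, dot (u j) (linePt (u i) w s n) < s) ∧
        ∀ j > i, dot (u j) (linePt (u i) w s n) ≤ s := by
  have h_line : dot (u i) (linePt (u i) w s n) = s := (range_linePt hw s).subset (mem_range_self n)
  simp only [latticeEdge, mem_ofPred_eq, h_line, true_and]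

lemma ncard_latticeBoundary_eq_sum [LinearOrder ι] [Fintype ι] {u w : ι → ℤ × ℤ} {s : ℤ}
    (hw : ∀ i, dot (u i) (w i) = 1) {I : ι → Finset ℤ}
    (hI : ∀ i n, linePt (u i) (w i) s n ∈ latticeEdge u s i ↔ n ∈ I i) :
    (latticeBoundary u s).ncard = ∑ i, (I i).card := by
  have h_image (i : ι) : latticeEdge u s i = linePt (u i) (w i) s '' I i := by
    have h_preimage : linePt (u i) (w i) s ⁻¹' latticeEdge u s i = I i := ext (hI i)
    rw [← h_preimage, image_preimage_eq_of_subset]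
    rw [range_linePt (hw i)]
    exact fun P hP ↦ hP.1
  rw [ncard_latticeBoundary fun i ↦ h_image i ▸ (I i).finite_toSet.image _]
  refine Finset.sum_congr rfl fun i _ ↦ ?_
  rw [h_image, ncard_image_of_injective _ (linePt_injective (hw i) s), ncard_coe_finset]

end Lattice

/-- A solution `(x, y)` in coprime positive integers of the Markov-type equation
`a x² + c y² + N = a N α ε x y`; the balance condition `a ε = c φ` makes the equation symmetric
under `(x, ε, a) ↔ (y, φ, c)`. The associated triangle has `N ε φ` boundary lattice points. -/
structure MarkovSolution (N α ε φ a c x y : ℤ) : Prop where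
  N_pos : 0 < N
  α_pos : 0 < α
  ε_pos : 0 < ε
  φ_pos : 0 < φ
  a_pos : 0 < a
  c_pos : 0 < c
  x_pos : 0 < x
  y_pos : 0 < y
  balance : a * ε = c * φ
  markov : a * x ^ 2 + c * y ^ 2 + N = a * N * α * ε * x * y
  coprime : IsCoprime x y

namespace MarkovSolution

variable {N α ε φ a c x y : ℤ}

lemma symm (h : MarkovSolution N α ε φ a c x y) : MarkovSolution N α φ ε c a y x where
  N_pos := h.N_pos
  α_pos := h.α_pos
  ε_pos := h.φ_pos
  φ_pos := h.ε_pos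
  a_pos := h.c_pos
  c_pos := h.a_pos
  x_pos := h.y_pos
  y_pos := h.x_pos
  balance := h.balance.symm
  markov := by linear_combination h.markov + N * α * x * y * h.balance
  coprime := h.coprime.symm

/-- Vieta jumping: the new first coordinate is the other root of the equation in `x`. -/
lemma jump (h : MarkovSolution N α ε φ a c x y) :
    MarkovSolution N α ε φ a c (N * α * ε * y - x) y where
  N_pos := h.N_pos
  α_pos := h.α_pos
  ε_pos := h.ε_pos
  φ_pos := h.φ_pos
  a_pos := h.a_pos
  c_pos := h.c_pos
  x_pos := by
    obtain ⟨hN, -, -, -, ha, hc, hx, hy, -, h_markov, -⟩ := h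
    have h_prod : a * x * (N * α * ε * y - x) = c * y ^ 2 + N := by linear_combination -h_markov
    exact pos_of_mul_pos_right (h_prod.symm ▸ by positivity : 0 < a * x * _) (by positivity)
  y_pos := h.y_pos
  balance := h.balance
  markov := by linear_combination h.markov
  coprime := by
    rw [sub_eq_neg_add]
    exact h.coprime.neg_left.add_mul_right_left _

lemma exists_lt (h : MarkovSolution N α ε φ a c x y) (hε : 3 ≤ N * α * ε) (hφ : 3 ≤ N * α * φ)
    (hxy : x ≤ y) (K : ℤ) : ∃ x' y', MarkovSolution N α ε φ a c x' y' ∧ K < x' := by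
  suffices exists_natCast_lt : ∀ n : ℕ,
      ∃ x' y', MarkovSolution N α ε φ a c x' y' ∧ x' ≤ y' ∧ n < x' by
    obtain ⟨x', y', h', -, hK⟩ := exists_natCast_lt K.toNat
    exact ⟨x', y', h', K.self_le_toNat.trans_lt hK⟩
  intro n
  induction n with
  | zero => exact ⟨x, y, h, hxy, h.x_pos⟩
  | succ n ih =>
    obtain ⟨x, y, h, hxy, hn⟩ := ih
    have h_fst : 3 * y ≤ N * α * ε * y := mul_le_mul_of_nonneg_right hε h.y_pos.le
    have h_snd := mul_le_mul_of_nonneg_right hφ h.jump.x_pos.le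
    refine ⟨_, _, h.jump.symm.jump.symm, ?_, ?_⟩ <;> push_cast <;> linarith [h.x_pos]

end MarkovSolution

/-- The normals `u` of the triangle attached to a solution `(x, y)`, scaled so that the edge lies on
the line `dot u P = 1`. -/
def markovNormal (N α ε a x y : ℤ) : Fin 3 → ℤ × ℤ :=
  ![(0, 1), (-(α ^ 2 * N), 1), (a * α ^ 2 * x ^ 2, 1 - a * α * ε * x * y)]

/-- The vertices of the triangle attached to a solution of the Markov-type equation, the `i`-th one
being opposite to the edge with normal `markovNormal N α ε a x y i`. -/
def markovVertex (N α ε φ x y : ℤ) : Fin 3 → ℚ × ℚ :=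
  ![(-(φ * x / (α * y)), 1 - N * α * φ * x / y), (ε * y / (α * x), 1), (0, 1)]

/-- For each edge, a lattice point of the line spanned by it, to serve as base point of `linePt`.
The third one is chosen so that the intervals `markovInterval` fit end to end. -/
def markovBase (α ε a x y : ℤ) : Fin 3 → ℤ × ℤ :=
  ![(0, 1), (0, 1), (a * ε ^ 2 * y ^ 2, a * α * ε * x * y + 1)]

lemma dot_markovNormal_markovBase (N α ε a x y : ℤ) (i : Fin 3) :
    dot (markovNormal N α ε a x y i) (markovBase α ε a x y i) = 1 := by
  fin_cases i <;> simp only [Fin.zero_eta, Fin.mk_one, Fin.reduceFinMk, dot, markovNormal,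
    markovBase, Matrix.cons_val] <;> ring

/-- The intervals of positions filled by the lattice points of the three edges of `s` times the
triangle; laid end to end, they form an interval of length `s N ε φ`. -/
noncomputable def markovInterval (N α ε φ x y s : ℤ) : Fin 3 → Finset ℤ :=
  ![Finset.Icc 0 (s * ε * y / (α * x)), Finset.Ico (-(s * φ * x / (α * y))) 0,
    Finset.Ioo (s * ε * y / (α * x)) (s * (N * ε * φ) - s * φ * x / (α * y))]

namespace MarkovSolution

variable {N α ε φ a c x y : ℤ}

lemma dotCLM_markovVertex_of_ne (h : MarkovSolution N α ε φ a c x y) (i j : Fin 3) (hij : i ≠ j) :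
    dotCLM (markovNormal N α ε a x y i) ((qpt ∘ markovVertex N α ε φ x y) j) = 1 := by
  have hx : (x : ℚ) ≠ 0 := mod_cast h.x_pos.ne'
  have hy : (y : ℚ) ≠ 0 := mod_cast h.y_pos.ne'
  have hα : (α : ℚ) ≠ 0 := mod_cast h.α_pos.ne'
  have h_balance : (a * ε : ℚ) = c * φ := mod_cast h.balance
  have h_markov : (a * x ^ 2 + c * y ^ 2 + N : ℚ) = a * N * α * ε * x * y := mod_cast h.markov
  suffices on_edge : (markovNormal N α ε a x y i).1 * (markovVertex N α ε φ x y j).1 +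
      (markovNormal N α ε a x y i).2 * (markovVertex N α ε φ x y j).2 = (1 : ℚ) by
    rw [Function.comp_apply, dotCLM_qpt, on_edge, Rat.cast_one]
  fin_cases i <;> fin_cases j <;>
    simp only [Fin.zero_eta, Fin.mk_one, Fin.reduceFinMk, ne_eq, not_true_eq_false, markovNormal,
      markovVertex, Matrix.cons_val] at hij ⊢ <;> push_cast <;> field_simp <;> try ring1
  -- The incidence of edge `2` with vertex `0` is the equation itself.
  linear_combination -(α * x * φ) * h_markov - α * x * y ^ 2 * h_balance

lemma dotCLM_markovVertex_self (h : MarkovSolution N α ε φ a c x y) (i : Fin 3) :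
    dotCLM (markovNormal N α ε a x y i) ((qpt ∘ markovVertex N α ε φ x y) i) < 1 := by
  obtain ⟨hN, hα, hε, hφ, ha, -, hx, hy, -⟩ := h
  rify at hN hα hε hφ ha hx hy
  have slack : 1 - dotCLM (markovNormal N α ε a x y i) ((qpt ∘ markovVertex N α ε φ x y) i) =
      (![N * α * φ * x / y, N * α * ε * y / x, a * α * ε * x * y] : Fin 3 → ℝ) i := by
    rw [Function.comp_apply, dotCLM_apply]
    fin_cases i <;>
      simp only [Fin.zero_eta, Fin.mk_one, Fin.reduceFinMk, markovNormal, markovVertex, qpt,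
        Matrix.cons_val] <;> push_cast <;> field_simp <;> ring
  rw [← sub_pos, slack]
  fin_cases i <;> simp only [Fin.zero_eta, Fin.mk_one, Fin.reduceFinMk, Matrix.cons_val] <;>
    positivity

lemma affineIndependent_markovVertex (h : MarkovSolution N α ε φ a c x y) :
    AffineIndependent ℝ (qpt ∘ markovVertex N α ε φ x y) :=
  affineIndependent_of_facets h.dotCLM_markovVertex_of_ne fun i ↦ (h.dotCLM_markovVertex_self i).ne

lemma convexHull_markovVertex (h : MarkovSolution N α ε φ a c x y) :
    convexHull ℝ (range (qpt ∘ markovVertex N α ε φ x y)) =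
      normalPolygon (markovNormal N α ε a x y) :=
  convexHull_range_eq_polyhedron (by simp) h.dotCLM_markovVertex_of_ne h.dotCLM_markovVertex_self

lemma isRatTriangle (h : MarkovSolution N α ε φ a c x y) :
    IsRatTriangle (normalPolygon (markovNormal N α ε a x y)) :=
  h.convexHull_markovVertex ▸ isRatTriangle_convexHull h.affineIndependent_markovVertex

lemma exists_hasDenom (h : MarkovSolution N α ε φ a c x y) :
    ∃ d, HasDenom (normalPolygon (markovNormal N α ε a x y)) d :=
  h.convexHull_markovVertex ▸ exists_hasDenom_convexHull _

lemma latticePolygon_zero (h : MarkovSolution N α ε φ a c x y) :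
    latticePolygon (markovNormal N α ε a x y) 0 = {0} := by
  apply latticePolygon_zero_eq
  rw [← h.convexHull_markovVertex, isBounded_convexHull]
  exact (finite_range _).isBounded

lemma linePt_mem_latticeEdge_zero (h : MarkovSolution N α ε φ a c x y) (s n : ℤ) :
    linePt (markovNormal N α ε a x y 0) (markovBase α ε a x y 0) s n ∈
      latticeEdge (markovNormal N α ε a x y) s 0 ↔ n ∈ markovInterval N α ε φ x y s 0 := by
  rw [linePt_mem_latticeEdge (dot_markovNormal_markovBase N α ε a x y 0)]
  set P := linePt (markovNormal N α ε a x y 0) (markovBase α ε a x y 0) s n with hP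
  have slack_one : s - dot (markovNormal N α ε a x y 1) P = α ^ 2 * N * n := by
    rw [hP, dot_linePt]
    simp only [dot, markovNormal, markovBase, Matrix.cons_val]
    ring
  have slack_two : s - dot (markovNormal N α ε a x y 2) P =
      a * (α * x) * (s * ε * y - n * (α * x)) := by
    rw [hP, dot_linePt]
    simp only [dot, markovNormal, markovBase, Matrix.cons_val]
    ring
  obtain ⟨hN, hα, -, -, ha, -, hx, -⟩ := h
  have h_one : dot (markovNormal N α ε a x y 1) P ≤ s ↔ 0 ≤ n := by
    rw [← sub_nonneg, slack_one, mul_nonneg_iff_of_pos_left (by positivity)]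
  have h_two : dot (markovNormal N α ε a x y 2) P ≤ s ↔ n ≤ s * ε * y / (α * x) := by
    rw [← sub_nonneg, slack_two, mul_nonneg_iff_of_pos_left (by positivity), sub_nonneg,
      Int.le_ediv_iff_mul_le (by positivity)]
  simp [Fin.forall_fin_succ, h_one, h_two, markovInterval]

lemma linePt_mem_latticeEdge_one (h : MarkovSolution N α ε φ a c x y) (s n : ℤ) :
    linePt (markovNormal N α ε a x y 1) (markovBase α ε a x y 1) s n ∈
      latticeEdge (markovNormal N α ε a x y) s 1 ↔ n ∈ markovInterval N α ε φ x y s 1 := by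
  rw [linePt_mem_latticeEdge (dot_markovNormal_markovBase N α ε a x y 1)]
  set P := linePt (markovNormal N α ε a x y 1) (markovBase α ε a x y 1) s n with hP
  have slack_zero : s - dot (markovNormal N α ε a x y 0) P = α ^ 2 * N * -n := by
    rw [hP, dot_linePt]
    simp only [dot, markovNormal, markovBase, Matrix.cons_val]
    ring
  have slack_two : s - dot (markovNormal N α ε a x y 2) P =
      c * (α * y) * (s * φ * x + n * (α * y)) := by
    rw [hP, dot_linePt]
    simp only [dot, markovNormal, markovBase, Matrix.cons_val]
    linear_combination -n * α ^ 2 * h.markov + s * α * x * y * h.balance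
  obtain ⟨hN, hα, -, -, -, hc, -, hy, -⟩ := h
  have h_zero : dot (markovNormal N α ε a x y 0) P < s ↔ n < 0 := by
    rw [← sub_pos, slack_zero, mul_pos_iff_of_pos_left (by positivity), neg_pos]
  have h_two : dot (markovNormal N α ε a x y 2) P ≤ s ↔ -(s * φ * x / (α * y)) ≤ n := by
    rw [← sub_nonneg, slack_two, mul_nonneg_iff_of_pos_left (by positivity), ← sub_neg_eq_add,
      sub_nonneg, ← neg_mul, neg_le, Int.le_ediv_iff_mul_le (by positivity)]
  simp [Fin.forall_fin_succ, h_zero, h_two, markovInterval, and_comm]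

lemma linePt_mem_latticeEdge_two (h : MarkovSolution N α ε φ a c x y) (s n : ℤ) :
    linePt (markovNormal N α ε a x y 2) (markovBase α ε a x y 2) s n ∈
      latticeEdge (markovNormal N α ε a x y) s 2 ↔ n ∈ markovInterval N α ε φ x y s 2 := by
  rw [linePt_mem_latticeEdge (dot_markovNormal_markovBase N α ε a x y 2)]
  set P := linePt (markovNormal N α ε a x y 2) (markovBase α ε a x y 2) s n with hP
  have slack_zero : s - dot (markovNormal N α ε a x y 0) P =
      a * (α * x) * (n * (α * x) - s * ε * y) := by
    rw [hP, dot_linePt]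
    simp only [dot, markovNormal, markovBase, Matrix.cons_val]
    ring
  have slack_one : s - dot (markovNormal N α ε a x y 1) P =
      c * (α * y) * ((s * (N * ε * φ) - n) * (α * y) - s * φ * x) := by
    rw [hP, dot_linePt]
    simp only [dot, markovNormal, markovBase, Matrix.cons_val]
    linear_combination
      n * α ^ 2 * h.markov + (s * α ^ 2 * N * ε * y ^ 2 - s * α * x * y) * h.balance
  obtain ⟨-, hα, -, -, ha, hc, hx, hy, -⟩ := h
  have h_zero : dot (markovNormal N α ε a x y 0) P < s ↔ s * ε * y / (α * x) < n := by
    rw [← sub_pos, slack_zero, mul_pos_iff_of_pos_left (by positivity), sub_pos,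
      Int.ediv_lt_iff_lt_mul (by positivity)]
  have h_one : dot (markovNormal N α ε a x y 1) P < s ↔
      n < s * (N * ε * φ) - s * φ * x / (α * y) := by
    rw [← sub_pos, slack_one, mul_pos_iff_of_pos_left (by positivity), sub_pos, lt_sub_comm,
      Int.ediv_lt_iff_lt_mul (by positivity)]
  simp [Fin.forall_fin_succ, h_zero, h_one, markovInterval]

lemma ediv_add_ediv_lt (h : MarkovSolution N α ε φ a c x y) {s : ℤ} (hs : 0 < s) :
    s * ε * y / (α * x) + s * φ * x / (α * y) < s * (N * ε * φ) := by
  have h_slack : c * (N * ε * φ * α * x * y - ε * y ^ 2 - φ * x ^ 2) = N * ε := by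
    linear_combination -ε * h.markov + (x ^ 2 - N * ε * α * x * y) * h.balance
  obtain ⟨hN, hα, hε, -, -, hc, hx, hy, -⟩ := h
  have h_pos : 0 < N * ε * φ * α * x * y - ε * y ^ 2 - φ * x ^ 2 :=
    pos_of_mul_pos_right (h_slack.symm ▸ by positivity : 0 < c * _) hc.le
  have hp : s * ε * y / (α * x) * (α * x) ≤ s * ε * y := Int.ediv_mul_le _ (by positivity)
  have hq : s * φ * x / (α * y) * (α * y) ≤ s * φ * x := Int.ediv_mul_le _ (by positivity)
  refine lt_of_mul_lt_mul_right ?_ (by positivity : 0 ≤ α * x * y)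
  calc (s * ε * y / (α * x) + s * φ * x / (α * y)) * (α * x * y)
      = s * ε * y / (α * x) * (α * x) * y + s * φ * x / (α * y) * (α * y) * x := by ring
    _ ≤ s * ε * y * y + s * φ * x * x := by gcongr
    _ = s * (N * ε * φ) * (α * x * y) -
        s * (N * ε * φ * α * x * y - ε * y ^ 2 - φ * x ^ 2) := by ring
    _ < s * (N * ε * φ) * (α * x * y) := sub_lt_self _ (by positivity)

lemma ncard_latticeBoundary (h : MarkovSolution N α ε φ a c x y) {s : ℤ} (hs : 0 < s) :
    ((latticeBoundary (markovNormal N α ε a x y) s).ncard : ℤ) = s * (N * ε * φ) := by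
  have h_edge : ∀ i n, linePt (markovNormal N α ε a x y i) (markovBase α ε a x y i) s n ∈
      latticeEdge (markovNormal N α ε a x y) s i ↔ n ∈ markovInterval N α ε φ x y s i := by
    intro i
    fin_cases i
    exacts [h.linePt_mem_latticeEdge_zero s, h.linePt_mem_latticeEdge_one s,
      h.linePt_mem_latticeEdge_two s]
  have h_lt := h.ediv_add_ediv_lt hs
  obtain ⟨-, hα, hε, hφ, -, -, hx, hy, -⟩ := h
  have hp : 0 ≤ s * ε * y / (α * x) := by positivity
  have hq : 0 ≤ s * φ * x / (α * y) := by positivity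
  rw [ncard_latticeBoundary_eq_sum (dot_markovNormal_markovBase N α ε a x y) h_edge]
  simp only [Fin.sum_univ_three, markovInterval, Matrix.cons_val, Int.card_Icc, Int.card_Ico,
    Int.card_Ioo]
  lia

lemma x_le_mul_of_hasDenom (h : MarkovSolution N α ε φ a c x y) {d : ℕ}
    (hd : HasDenom (normalPolygon (markovNormal N α ε a x y)) d) : x ≤ d * ε := by
  rw [← h.convexHull_markovVertex] at hd
  obtain ⟨m, n, hmn⟩ := hd.smul_qpt_mem_latticePts h.affineIndependent_markovVertex 1
  have hd_pos : (0 : ℤ) < d := mod_cast hd.1.1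
  have hx : (x : ℝ) ≠ 0 := mod_cast h.x_pos.ne'
  have hα : (α : ℝ) ≠ 0 := mod_cast h.α_pos.ne'
  have h_fst : (d * (ε * y / (α * x)) : ℝ) = m := by
    simpa [qpt, markovVertex] using congrArg Prod.fst hmn
  field_simp at h_fst
  have h_dvd : x ∣ d * ε * y := ⟨m * α, by
    rify
    linear_combination h_fst⟩
  exact Int.le_of_dvd (mul_pos hd_pos h.ε_pos) (h.coprime.dvd_of_dvd_mul_right h_dvd)

end MarkovSolution

lemma exists_markovSolution {b : ℕ} (hb1 : 1 ≤ b) (hb9 : b ≤ 9) (hb7 : b ≠ 7) :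
    ∃ N α ε φ a c x y : ℤ, MarkovSolution N α ε φ a c x y ∧ N * ε * φ = b ∧
      3 ≤ N * α * ε ∧ 3 ≤ N * α * φ ∧ x ≤ y := by
  interval_cases b
  · exact ⟨1, 3, 1, 1, 1, 1, 1, 1, by constructor <;> norm_num, by norm_num⟩
  · exact ⟨2, 2, 1, 1, 1, 1, 1, 1, by constructor <;> norm_num, by norm_num⟩
  · exact ⟨3, 1, 1, 1, 3, 3, 1, 1, by constructor <;> norm_num, by norm_num⟩
  · exact ⟨4, 1, 1, 1, 2, 2, 1, 1, by constructor <;> norm_num, by norm_num⟩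
  · exact ⟨5, 1, 1, 1, 1, 1, 1, 2, by constructor <;> norm_num, by norm_num⟩
  · exact ⟨3, 1, 2, 1, 1, 2, 1, 1, by constructor <;> norm_num, by norm_num⟩
  · exact absurd rfl hb7
  · exact ⟨2, 1, 2, 2, 1, 1, 1, 1, by constructor <;> norm_num, by norm_num⟩
  · exact ⟨1, 1, 3, 3, 1, 1, 1, 1, by constructor <;> norm_num, by norm_num⟩

/-- for each 1 ≤ b ≤ 9 with b ≠ 7 and each positive integer k there
is a rational pseudointegral triangle of denominator > k with exactly one
interior lattice point and exactly b boundary lattice points. -/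
theorem stmt_7 (b : ℕ) (hb1 : 1 ≤ b) (hb9 : b ≤ 9) (hb7 : b ≠ 7)
    (k : ℕ) (hk : 0 < k) :
    ∃ T : Set (ℝ × ℝ), IsRatTriangle T ∧ IsPIP T ∧
      (∃ d : ℕ, HasDenom T d ∧ k < d) ∧
      (interior T ∩ latticePts).ncard = 1 ∧
      (frontier T ∩ latticePts).ncard = b := by
  obtain ⟨N, α, ε, φ, a, c, x₀, y₀, h₀, h_b, hε, hφ, h_le⟩ := exists_markovSolution hb1 hb9 hb7
  obtain ⟨x, y, h, hx⟩ := h₀.exists_lt hε hφ h_le (k * ε)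
  have h_zero := h.latticePolygon_zero
  have h_boundary (s : ℕ) (hs : 0 < s) :
      (latticeBoundary (markovNormal N α ε a x y) s).ncard = s * b := by
    zify
    rw [h.ncard_latticeBoundary (Nat.cast_pos.2 hs), h_b]
  obtain ⟨d, hd⟩ := h.exists_hasDenom
  refine ⟨normalPolygon (markovNormal N α ε a x y), h.isRatTriangle,
    isPIP_normalPolygon hb1 h_zero h_boundary, ⟨d, hd, ?_⟩, ?_, ?_⟩
  · exact_mod_cast lt_of_mul_lt_mul_right (hx.trans_le (h.x_le_mul_of_hasDenom hd)) h.ε_pos.le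
  · rw [ncard_inter_latticePts, intPt_preimage_interior_normalPolygon, h_zero, ncard_singleton]
  · rw [ncard_inter_latticePts, intPt_preimage_frontier_normalPolygon]
    exact_mod_cast (h_boundary 1 one_pos).trans (one_mul b)
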